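/- arXiv:2510.04099 — 2 statements merged into one kernel-verified Lean document; each statement's English description precedes it below -/
import Mathlib

section
/- Let m ≥ 3 be an integer with an odd factor and let (e_1,…,e_m) be an optimal edge family of size m. For each i ∈ {1,…,m} let α_i ∈ [0, 2π) be the counterclockwise angle from e_1 to e_i, and let ψ_i ∈ (0, π] be the unique value with ψ_i ≡ α_i (mod π). Then {ψ_1, ψ_2, …, ψ_m} = {jπ/m : j = 1,…,m}; that is, the directions of the edges, taken modulo π and measured relative to e_1, are exactly the m equally spaced angles jπ/m. -/
noncomputable section

open Real
open scoped RealInnerProductSpace ENNReal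

/-- ℝ² as a Euclidean space. -/
abbrev E2 : Type := EuclideanSpace ℝ (Fin 2)

/-- The vector `(x, y)` in ℝ². -/
def vec2 (x y : ℝ) : E2 := (WithLp.equiv 2 (Fin 2 → ℝ)).symm ![x, y]

/-- The coordinates of a vector in ℝ². -/
def toFun2 (v : E2) : Fin 2 → ℝ := WithLp.equiv 2 (Fin 2 → ℝ) v

/-- The phaseless measurement map `Φ_A(x) = (|⟨a_j, x⟩|)_j`. -/
def PhiMap {m : ℕ} (a : Fin m → E2) (x : E2) : EuclideanSpace ℝ (Fin m) :=
  (WithLp.equiv 2 (Fin m → ℝ)).symm fun j => |⟪a j, x⟫|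

/-- The distance `dist(x,y) = min ‖x − y‖ ‖x + y‖` (real phase retrieval distance). -/
def pdist (x y : E2) : ℝ := min ‖x - y‖ ‖x + y‖

/-- The set of Lipschitz ratios of the phaseless measurement map. -/
def ratioSet {m : ℕ} (a : Fin m → E2) : Set ℝ :=
  {r | ∃ x y : E2, pdist x y ≠ 0 ∧ r = ‖PhiMap a x - PhiMap a y‖ / pdist x y}

/-- The optimal lower Lipschitz constant `L_A`. -/
def lipL {m : ℕ} (a : Fin m → E2) : ℝ := sInf (ratioSet a)

/-- The optimal upper Lipschitz constant `U_A`. -/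
def lipU {m : ℕ} (a : Fin m → E2) : ℝ := sSup (ratioSet a)

/-- The condition number `β_A = U_A / L_A`, with `β_A = +∞` when `L_A = 0`. -/
def condNum {m : ℕ} (a : Fin m → E2) : ℝ≥0∞ :=
  if lipL a = 0 then ⊤ else ENNReal.ofReal (lipU a / lipL a)

/-- An edge family: nonzero vectors with pairwise distinct directions summing to zero
(the edge vectors of a strictly convex polygon). -/
def IsEdgeFamily {m : ℕ} (e : Fin m → E2) : Prop :=
  (∀ j, e j ≠ 0) ∧
  (∀ i j : Fin m, i ≠ j → ‖e i‖⁻¹ • e i ≠ ‖e j‖⁻¹ • e j) ∧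
  ∑ j, e j = 0

/-- The diameter-to-perimeter ratio of the polygon with edge vectors `e`. -/
def rRatio {m : ℕ} (e : Fin m → E2) : ℝ :=
  sSup {s | ∃ u : E2, ‖u‖ = 1 ∧ s = ∑ j, |⟪e j, u⟫|} / (2 * ∑ j, ‖e j‖)

/-- An optimal edge family: minimizes `rRatio` among all edge families of size `m`. -/
def IsOptimalEdgeFamily {m : ℕ} (e : Fin m → E2) : Prop :=
  IsEdgeFamily e ∧ ∀ e' : Fin m → E2, IsEdgeFamily e' → rRatio e ≤ rRatio e'

/-- The complex square map on ℝ² ≅ ℂ: `f(t·(cos φ, sin φ)) = t²·(cos 2φ, sin 2φ)`. -/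
def csq (v : E2) : E2 :=
  vec2 (toFun2 v 0 ^ 2 - toFun2 v 1 ^ 2) (2 * toFun2 v 0 * toFun2 v 1)

/-- The harmonic frame `E_m`: the `j`-th row is `(cos((j−1)π/m), sin((j−1)π/m))`, `j = 1,…,m`. -/
def harmonicFrame (m : ℕ) : Fin m → E2 :=
  fun j => vec2 (Real.cos ((j : ℕ) * π / m)) (Real.sin ((j : ℕ) * π / m))


/-- Rotation of a vector in ℝ² by angle `θ`. -/
def rot (θ : ℝ) (v : E2) : E2 :=
  vec2 (Real.cos θ * toFun2 v 0 - Real.sin θ * toFun2 v 1)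
    (Real.sin θ * toFun2 v 0 + Real.cos θ * toFun2 v 1)

/-!
Let `l_j` be the edge lengths, `L` the perimeter and `h θ = ∑ l_j |sin (θ - ψ_j)|` the function
whose maximum is twice the diameter. The integral of `h` over a period is `2 L`. Between two
consecutive values of `ψ` every `sin (θ - ψ_j)` keeps its sign, so `h` is a single sinusoid there
and its integral over a gap of length `δ` is `2 sin (δ / 2)` times its value at the midpoint.
Bounding these values by `max h` and applying Jensen's inequality to the `m` gaps, of total length
`π`, gives `L ≤ m sin (π / (2 m)) max h`, with equality only if all gaps equal `π / m`.

If `m = p k` with `k > 1` odd, the bound is attained: the harmonic frame with signs alternating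
between blocks of `p` vectors sums to zero, because `-exp (i π / k)` is a nontrivial `k`-th root of
unity. Optimal families are therefore extremal in the inequality above.
-/

section SineIntegrals

lemma integral_sin_sub (a b ψ : ℝ) :
    ∫ x in a..b, sin (x - ψ) = 2 * sin ((b - a) / 2) * sin ((a + b) / 2 - ψ) := by
  rw [intervalIntegral.integral_comp_sub_right (fun x => sin x), integral_sin, cos_sub_cos,
    show (a - ψ + (b - ψ)) / 2 = (a + b) / 2 - ψ by ring,
    show (a - ψ - (b - ψ)) / 2 = -((b - a) / 2) by ring, sin_neg]
  ring

lemma integral_abs_sin_sub {a b ψ : ℝ} (hab : a ≤ b)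
    (h : (∀ x ∈ Set.Icc a b, sin (x - ψ) ≤ 0) ∨ ∀ x ∈ Set.Icc a b, 0 ≤ sin (x - ψ)) :
    ∫ x in a..b, |sin (x - ψ)| = 2 * sin ((b - a) / 2) * |sin ((a + b) / 2 - ψ)| := by
  have hmid : (a + b) / 2 ∈ Set.Icc a b := ⟨by linarith, by linarith⟩
  rw [← Set.uIcc_of_le hab] at h hmid
  rcases h with hneg | hpos
  · rw [intervalIntegral.integral_congr fun x hx => abs_of_nonpos (hneg x hx),
      intervalIntegral.integral_neg, integral_sin_sub, abs_of_nonpos (hneg _ hmid), mul_neg]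
  · rw [intervalIntegral.integral_congr fun x hx => abs_of_nonneg (hpos x hx),
      integral_sin_sub, abs_of_nonneg (hpos _ hmid)]

lemma integral_abs_sin_sub_period (t ψ : ℝ) : ∫ x in t..t + π, |sin (x - ψ)| = 2 := by
  have hper : Function.Periodic (fun x => |sin (x - ψ)|) π := fun x => by
    simp only [add_sub_right_comm, sin_add_pi, abs_neg]
  rw [hper.intervalIntegral_add_eq t ψ, integral_abs_sin_sub (by linarith [pi_pos])
    (Or.inr fun x hx => sin_nonneg_of_nonneg_of_le_pi (by linarith [hx.1]) (by linarith [hx.2])),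
    show (ψ + π - ψ) / 2 = π / 2 by ring, show (ψ + (ψ + π)) / 2 - ψ = π / 2 by ring]
  simp

end SineIntegrals

section Partitions

lemma sum_succ_sub_castSucc {G : Type*} [AddCommGroup G] {n : ℕ} (f : Fin (n + 1) → G) :
    ∑ k : Fin n, (f k.succ - f k.castSucc) = f (Fin.last n) - f 0 := by
  rw [Finset.sum_sub_distrib, sub_eq_sub_iff_add_eq_add, add_comm, ← Fin.sum_univ_succ,
    Fin.sum_univ_castSucc, add_comm]

lemma sum_integral_castSucc_succ {f : ℝ → ℝ} (hf : Continuous f) {n : ℕ} (a : Fin (n + 1) → ℝ) :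
    ∑ k : Fin n, ∫ x in a k.castSucc..a k.succ, f x = ∫ x in a 0..a (Fin.last n), f x := by
  have hint := fun s t : ℝ => hf.intervalIntegrable (μ := MeasureTheory.volume) s t
  have hsub := fun s t : ℝ => intervalIntegral.integral_interval_sub_left (hint 0 t) (hint 0 s)
  rw [← hsub, ← sum_succ_sub_castSucc fun k => ∫ x in (0 : ℝ)..a k, f x]
  exact Finset.sum_congr rfl fun k _ => (hsub _ _).symm

lemma sin_pi_div_two_mul_pos {m : ℕ} (hm : m ≠ 0) : 0 < sin (π / (2 * m)) := by
  have hm1 : (1 : ℝ) ≤ m := by exact_mod_cast Nat.one_le_iff_ne_zero.2 hm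
  refine sin_pos_of_pos_of_lt_pi (by positivity) ?_
  exact div_lt_self pi_pos (by linarith)

-- Each term is bounded by the integral of `|sin|` over an interval of length `π / m`; together
-- these intervals cover one period.
lemma sum_abs_sin_mul_sin_le_one {m : ℕ} (hm : m ≠ 0) (ψ : ℝ) :
    (∑ j : Fin m, |sin ((j : ℕ) * π / m - ψ)|) * sin (π / (2 * m)) ≤ 1 := by
  have hs : 0 ≤ sin (π / (2 * m)) := (sin_pi_div_two_mul_pos hm).le
  set a : Fin (m + 1) → ℝ := fun k => (k : ℕ) * π / m - π / (2 * m) with ha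
  have hterm (j : Fin m) : |sin ((j : ℕ) * π / m - ψ)| * sin (π / (2 * m)) ≤
      (∫ x in a j.castSucc..a j.succ, |sin (x - ψ)|) / 2 := by
    have hgap : (a j.succ - a j.castSucc) / 2 = π / (2 * m) := by
      simp only [ha, Fin.val_succ, Fin.val_castSucc]; push_cast; ring
    have hmid : (a j.castSucc + a j.succ) / 2 = (j : ℕ) * π / m := by
      simp only [ha, Fin.val_succ, Fin.val_castSucc]; push_cast; ring
    have hle : a j.castSucc ≤ a j.succ := by
      have : 0 ≤ π / (2 * m) := by positivity
      linarith
    have := intervalIntegral.abs_integral_le_integral_abs (f := fun x => sin (x - ψ))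
      (μ := MeasureTheory.volume) hle
    rw [integral_sin_sub, hgap, hmid, abs_mul, abs_mul, abs_of_nonneg hs, abs_two] at this
    linarith
  calc (∑ j : Fin m, |sin ((j : ℕ) * π / m - ψ)|) * sin (π / (2 * m))
      ≤ (∫ x in a 0..a (Fin.last m), |sin (x - ψ)|) / 2 := by
        rw [← sum_integral_castSucc_succ (by fun_prop), Finset.sum_mul, Finset.sum_div]
        exact Finset.sum_le_sum fun j _ => hterm j
    _ = 1 := by
        have hlast : a (Fin.last m) = a 0 + π := by
          simp only [ha, Fin.val_last, Fin.val_zero]; field_simp; push_cast; ring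
        rw [hlast, integral_abs_sin_sub_period, div_self two_ne_zero]

variable {n : ℕ} {a : Fin (n + 1) → ℝ}

lemma sum_sin_gap_mul_abs_sin {ψ : ℝ} (ha : Monotone a) (h0 : a 0 = 0) (hlast : a (Fin.last n) = π)
    (hψ : ψ ∈ Set.Icc 0 π) (hsep : ∀ k : Fin n, ψ ≤ a k.castSucc ∨ a k.succ ≤ ψ) :
    ∑ k : Fin n, sin ((a k.succ - a k.castSucc) / 2) *
      |sin ((a k.castSucc + a k.succ) / 2 - ψ)| = 1 := by
  have hterm (k : Fin n) : ∫ x in a k.castSucc..a k.succ, |sin (x - ψ)| =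
      2 * sin ((a k.succ - a k.castSucc) / 2) * |sin ((a k.castSucc + a k.succ) / 2 - ψ)| := by
    have hlo : 0 ≤ a k.castSucc := h0 ▸ ha (Fin.zero_le _)
    have hhi : a k.succ ≤ π := hlast ▸ ha (Fin.le_last _)
    refine integral_abs_sin_sub (ha k.castSucc_lt_succ.le) ((hsep k).symm.imp ?_ ?_) <;>
      rintro h x ⟨hax, hxb⟩
    · exact sin_nonpos_of_nonpos_of_neg_pi_le (by linarith) (by linarith [hψ.2])
    · exact sin_nonneg_of_nonneg_of_le_pi (by linarith) (by linarith [hψ.1])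
  have htotal : ∑ k : Fin n, ∫ x in a k.castSucc..a k.succ, |sin (x - ψ)| = 2 := by
    rw [sum_integral_castSucc_succ (by fun_prop), h0, hlast, ← zero_add π,
      integral_abs_sin_sub_period]
  simp only [hterm, mul_assoc, ← Finset.mul_sum] at htotal
  linarith

lemma sum_eq_sum_sin_gap_mul {ι : Type*} [Fintype ι] (l : ι → ℝ) {ψ : ι → ℝ} (ha : Monotone a)
    (h0 : a 0 = 0) (hlast : a (Fin.last n) = π) (hψ : ∀ j, ψ j ∈ Set.Icc 0 π)
    (hsep : ∀ j (k : Fin n), ψ j ≤ a k.castSucc ∨ a k.succ ≤ ψ j) :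
    ∑ j, l j = ∑ k : Fin n, sin ((a k.succ - a k.castSucc) / 2) *
      ∑ j, l j * |sin ((a k.castSucc + a k.succ) / 2 - ψ j)| := by
  simp only [Finset.mul_sum, mul_left_comm _ (l _)]
  rw [Finset.sum_comm]
  simp only [← Finset.mul_sum, sum_sin_gap_mul_abs_sin ha h0 hlast (hψ _) (hsep _), mul_one]

lemma eq_average_of_card_mul_sin_le_sum_sin {ι : Type*} [Fintype ι] {x : ι → ℝ}
    (hx : ∀ i, x i ∈ Set.Icc 0 π)
    (h : Fintype.card ι * sin ((∑ i, x i) / Fintype.card ι) ≤ ∑ i, sin (x i)) (i : ι) :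
    x i = (∑ i, x i) / Fintype.card ι := by
  have hcard : (0 : ℝ) < Fintype.card ι := by exact_mod_cast Fintype.card_pos_iff.2 ⟨i⟩
  have hw : ∑ _i : ι, (Fintype.card ι : ℝ)⁻¹ = 1 := by simp [hcard.ne']
  have hpos : ∀ i ∈ (Finset.univ : Finset ι), 0 < (Fintype.card ι : ℝ)⁻¹ := fun _ _ =>
    inv_pos.2 hcard
  have hmem : ∀ i ∈ (Finset.univ : Finset ι), x i ∈ Set.Icc 0 π := fun i _ => hx i
  have havg (f : ι → ℝ) : ∑ i, (Fintype.card ι : ℝ)⁻¹ • f i = (∑ i, f i) / Fintype.card ι := by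
    simp only [smul_eq_mul, inv_mul_eq_div, Finset.sum_div]
  have heq := (strictConcaveOn_sin_Icc.map_sum_eq_iff hpos hw hmem).1 <|
    le_antisymm (by rwa [havg, havg, le_div_iff₀' hcard])
      (strictConcaveOn_sin_Icc.concaveOn.le_map_sum (fun i hi => (hpos i hi).le) hw hmem)
  rw [heq i (Finset.mem_univ i), havg]

lemma half_gap_mem_Icc {b : ℝ} (ha : Monotone a) (h0 : a 0 = 0) (hlast : a (Fin.last n) = b)
    (k : Fin n) : (a k.succ - a k.castSucc) / 2 ∈ Set.Icc 0 b := by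
  have hlo : 0 ≤ a k.castSucc := h0 ▸ ha (Fin.zero_le _)
  have hhi : a k.succ ≤ b := hlast ▸ ha (Fin.le_last _)
  have hle := ha k.castSucc_lt_succ.le
  constructor <;> linarith

lemma eq_mul_div_of_mul_sin_le_sum_sin_gap (ha : Monotone a) (h0 : a 0 = 0)
    (hlast : a (Fin.last n) = π)
    (h : n * sin (π / (2 * n)) ≤ ∑ k : Fin n, sin ((a k.succ - a k.castSucc) / 2))
    (k : Fin (n + 1)) : a k = (k : ℕ) * π / n := by
  have havg : (∑ k : Fin n, (a k.succ - a k.castSucc) / 2) / n = π / (2 * n) := by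
    rw [← Finset.sum_div, sum_succ_sub_castSucc, h0, hlast, sub_zero, div_div]
  have hgap (k : Fin n) : (a k.succ - a k.castSucc) / 2 = π / (2 * n) := by
    rw [← havg]
    simpa only [Fintype.card_fin] using
      eq_average_of_card_mul_sin_le_sum_sin (half_gap_mem_Icc ha h0 hlast)
        (by simpa only [Fintype.card_fin, havg]) k
  induction k using Fin.induction with
  | zero => simp [h0]
  | succ k ih =>
    have hstep : a k.succ = a k.castSucc + 2 * (π / (2 * n)) := by linarith [hgap k]
    rw [hstep, ih, Fin.val_castSucc, Fin.val_succ]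
    push_cast
    ring

end Partitions

section SortedNodes

variable {m : ℕ} {ψ : Fin m → ℝ}

/-- The partition nodes `0, ψ_(1) ≤ ⋯ ≤ ψ_(m)` cut out by the values of `ψ`, listed in increasing
order after the left end point `0`. -/
def sortedNodes (ψ : Fin m → ℝ) : Fin (m + 1) → ℝ := Fin.cons 0 (ψ ∘ Tuple.sort ψ)

lemma sortedNodes_zero (ψ : Fin m → ℝ) : sortedNodes ψ 0 = 0 := rfl

lemma sortedNodes_succ (ψ : Fin m → ℝ) (k : Fin m) :
    sortedNodes ψ k.succ = ψ (Tuple.sort ψ k) := rfl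

lemma monotone_sortedNodes (hψ : ∀ j, 0 ≤ ψ j) : Monotone (sortedNodes ψ) := by
  intro i j hij
  cases i using Fin.cases with
  | zero => cases j using Fin.cases with
    | zero => rfl
    | succ j => exact hψ _
  | succ i => cases j using Fin.cases with
    | zero => exact absurd hij (Fin.succ_pos i).not_ge
    | succ j => exact Tuple.monotone_sort ψ (Fin.succ_le_succ_iff.1 hij)

lemma exists_sortedNodes_succ_eq (ψ : Fin m → ℝ) (j : Fin m) :
    ∃ i : Fin m, sortedNodes ψ i.succ = ψ j :=
  ⟨(Tuple.sort ψ).symm j, by rw [sortedNodes_succ, Equiv.apply_symm_apply]⟩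

lemma le_sortedNodes_castSucc_or_sortedNodes_succ_le (hψ : ∀ j, 0 ≤ ψ j) (j k : Fin m) :
    ψ j ≤ sortedNodes ψ k.castSucc ∨ sortedNodes ψ k.succ ≤ ψ j := by
  obtain ⟨i, hi⟩ := exists_sortedNodes_succ_eq ψ j
  rw [← hi]
  exact (lt_or_ge i k).imp (fun h => monotone_sortedNodes hψ (Fin.succ_le_castSucc_iff.2 h))
    fun h => monotone_sortedNodes hψ (Fin.succ_le_succ_iff.2 h)

lemma sortedNodes_last {b : ℝ} (hψ : ∀ j, ψ j ∈ Set.Icc 0 b) {j : Fin m} (hj : ψ j = b) :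
    sortedNodes ψ (Fin.last m) = b := by
  have hmono := monotone_sortedNodes fun j => (hψ j).1
  obtain ⟨i, hi⟩ := exists_sortedNodes_succ_eq ψ j
  refine le_antisymm ?_ (hj ▸ hi ▸ hmono (Fin.le_last _))
  cases m with
  | zero => exact j.elim0
  | succ m => exact (hψ _).2

lemma range_eq_of_sum_mul_abs_sin_le {l : Fin m → ℝ} (hl : 0 < ∑ j, l j)
    (hψ : ∀ j, ψ j ∈ Set.Icc 0 π) {j₀ : Fin m} (hj₀ : ψ j₀ = π)
    (h : ∀ θ, (∑ j, l j * |sin (θ - ψ j)|) * (m * sin (π / (2 * m))) ≤ ∑ j, l j) :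
    Set.range ψ = Set.range fun j : Fin m => ((j : ℕ) + 1) * π / m := by
  have hψ₀ (j : Fin m) : 0 ≤ ψ j := (hψ j).1
  set a := sortedNodes ψ
  have ha : Monotone a := monotone_sortedNodes hψ₀
  have h0 : a 0 = 0 := sortedNodes_zero ψ
  have hlast : a (Fin.last m) = π := sortedNodes_last hψ hj₀
  have hgap_nonneg (k : Fin m) : 0 ≤ sin ((a k.succ - a k.castSucc) / 2) :=
    sin_nonneg_of_mem_Icc (half_gap_mem_Icc ha h0 hlast k)
  have hsum := sum_eq_sum_sin_gap_mul l ha h0 hlast hψ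
    (le_sortedNodes_castSucc_or_sortedNodes_succ_le hψ₀)
  have hsin : m * sin (π / (2 * m)) ≤ ∑ k : Fin m, sin ((a k.succ - a k.castSucc) / 2) := by
    refine le_of_mul_le_mul_right ?_ hl
    rw [mul_comm]
    conv_lhs => rw [hsum]
    rw [Finset.sum_mul, Finset.sum_mul]
    refine Finset.sum_le_sum fun k _ => ?_
    rw [mul_assoc]
    exact mul_le_mul_of_nonneg_left (h _) (hgap_nonneg k)
  have hsorted : ψ ∘ Tuple.sort ψ = fun j : Fin m => ((j : ℕ) + 1) * π / m := funext fun j => by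
    have := eq_mul_div_of_mul_sin_le_sum_sin_gap ha h0 hlast hsin j.succ
    rwa [Fin.val_succ, Nat.cast_succ] at this
  rw [← hsorted, (Tuple.sort ψ).surjective.range_comp]

end SortedNodes

section Rotations

lemma inner_eq_sum_coords (v w : E2) : ⟪v, w⟫ = v 0 * w 0 + v 1 * w 1 := by
  rw [PiLp.inner_apply, Fin.sum_univ_two]
  simp only [RCLike.inner_apply, conj_trivial]
  ring

lemma rot_apply_zero (θ : ℝ) (v : E2) : rot θ v 0 = cos θ * v 0 - sin θ * v 1 := rfl

lemma rot_apply_one (θ : ℝ) (v : E2) : rot θ v 1 = sin θ * v 0 + cos θ * v 1 := rfl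

lemma rot_zero (v : E2) : rot 0 v = v := by
  ext i
  fin_cases i <;> simp [rot_apply_zero, rot_apply_one]

lemma rot_eq_add (θ : ℝ) (v : E2) : rot θ v = cos θ • v + sin θ • rot (π / 2) v := by
  ext i
  fin_cases i <;> simp [rot_apply_zero, rot_apply_one] <;> ring

lemma inner_rot_rot (s t : ℝ) (v : E2) : ⟪rot s v, rot t v⟫ = ‖v‖ ^ 2 * cos (s - t) := by
  rw [← real_inner_self_eq_norm_sq, inner_eq_sum_coords, inner_eq_sum_coords, cos_sub]
  simp only [rot_apply_zero, rot_apply_one]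
  ring

lemma norm_rot (θ : ℝ) (v : E2) : ‖rot θ v‖ = ‖v‖ := by
  have h := inner_rot_rot θ θ v
  rw [real_inner_self_eq_norm_sq, sub_self, cos_zero, mul_one] at h
  exact (sq_eq_sq₀ (norm_nonneg _) (norm_nonneg _)).1 h

lemma exists_eq_rot_of_norm_eq_one {u : E2} (hu : ‖u‖ = 1) : ∃ t, u = rot t (vec2 1 0) := by
  have hz : ‖(⟨u 0, u 1⟩ : ℂ)‖ = 1 := by
    rw [← hu, Complex.norm_eq_sqrt_sq_add_sq, EuclideanSpace.norm_eq, Fin.sum_univ_two]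
    simp only [norm_eq_abs, sq_abs]
  obtain ⟨t, ht⟩ := (Complex.norm_eq_one_iff _).1 hz
  have h0 := congrArg Complex.re ht
  have h1 := congrArg Complex.im ht
  rw [Complex.exp_ofReal_mul_I_re] at h0
  rw [Complex.exp_ofReal_mul_I_im] at h1
  refine ⟨t, ?_⟩
  ext i
  fin_cases i
  · simpa [rot_apply_zero, vec2] using h0.symm
  · simpa [rot_apply_one, vec2] using h1.symm

lemma sin_sub_eq_zero_of_smul_rot_eq {v : E2} (hv : v ≠ 0) {a b s t : ℝ} (ha : a ≠ 0)
    (h : a • rot s v = b • rot t v) : sin (s - t) = 0 := by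
  have h' := congrArg (fun w => ⟪w, rot (t + π / 2) v⟫) h
  simp only [real_inner_smul_left, inner_rot_rot] at h'
  rw [show t - (t + π / 2) = -(π / 2) by ring, show s - (t + π / 2) = s - t - π / 2 by ring,
    cos_neg, cos_pi_div_two, cos_sub_pi_div_two] at h'
  simpa [ha, hv] using h'

lemma sum_smul_rot_eq_zero {ι : Type*} [Fintype ι] {c θ : ι → ℝ}
    (h : ∑ j, (c j : ℂ) * Complex.exp (θ j * Complex.I) = 0) (v : E2) :
    ∑ j, c j • rot (θ j) v = 0 := by
  have hcos : ∑ j, c j * cos (θ j) = 0 := by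
    simpa only [Complex.re_sum, Complex.re_ofReal_mul, Complex.exp_ofReal_mul_I_re,
      Complex.zero_re] using congrArg Complex.re h
  have hsin : ∑ j, c j * sin (θ j) = 0 := by
    simpa only [Complex.im_sum, Complex.im_ofReal_mul, Complex.exp_ofReal_mul_I_im,
      Complex.zero_im] using congrArg Complex.im h
  simp only [rot_eq_add (θ _) v, smul_add, smul_smul, Finset.sum_add_distrib, ← Finset.sum_smul,
    hcos, hsin, zero_smul, add_zero]

lemma norm_inv_smul_rot {v : E2} (hv : v ≠ 0) (θ : ℝ) : ‖‖v‖⁻¹ • rot θ v‖ = 1 := by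
  rw [norm_smul, norm_rot, norm_inv, norm_norm, inv_mul_cancel₀ (norm_ne_zero_iff.2 hv)]

lemma abs_inner_eq_norm_mul_abs_sin {v w : E2} (hv : v ≠ 0) {α : ℝ}
    (h : ‖v‖ • w = ‖w‖ • rot α v) (θ : ℝ) :
    |⟪w, ‖v‖⁻¹ • rot (θ + π / 2) v⟫| = ‖w‖ * |sin (θ - α)| := by
  have hv' : ‖v‖ ≠ 0 := norm_ne_zero_iff.2 hv
  have hcos : cos (α - (θ + π / 2)) = -sin (θ - α) := by
    rw [← cos_neg, ← cos_add_pi_div_two]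
    ring_nf
  have hinner : ‖v‖ * ⟪w, rot (θ + π / 2) v⟫ = ‖w‖ * (‖v‖ ^ 2 * -sin (θ - α)) := by
    rw [← real_inner_smul_left, h, real_inner_smul_left, inner_rot_rot, hcos]
  have hval : ⟪w, ‖v‖⁻¹ • rot (θ + π / 2) v⟫ = -(‖w‖ * sin (θ - α)) := by
    rw [real_inner_smul_right, inv_mul_eq_iff_eq_mul₀ hv']
    refine mul_left_cancel₀ hv' (hinner.trans ?_)
    ring
  rw [hval, abs_neg, abs_mul, abs_norm]

end Rotations

section Ratio

variable {m : ℕ}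

lemma rRatio_le_iff {e : Fin m → E2} (he : 0 < ∑ j, ‖e j‖) {r : ℝ} :
    rRatio e ≤ r ↔ ∀ u : E2, ‖u‖ = 1 → ∑ j, |⟪e j, u⟫| ≤ r * (2 * ∑ j, ‖e j‖) := by
  have hbdd : BddAbove {s | ∃ u : E2, ‖u‖ = 1 ∧ s = ∑ j, |⟪e j, u⟫|} := by
    refine ⟨∑ j, ‖e j‖, ?_⟩
    rintro _ ⟨u, hu, rfl⟩
    exact Finset.sum_le_sum fun j _ => by simpa [hu] using abs_real_inner_le_norm (e j) u
  have hne : {s | ∃ u : E2, ‖u‖ = 1 ∧ s = ∑ j, |⟪e j, u⟫|}.Nonempty :=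
    have ⟨u, hu⟩ := exists_norm_eq E2 (zero_le_one' ℝ)
    ⟨_, u, hu, rfl⟩
  rw [rRatio, div_le_iff₀ (by positivity), csSup_le_iff hbdd hne]
  constructor
  · exact fun h u hu => h _ ⟨u, hu, rfl⟩
  · rintro h _ ⟨u, hu, rfl⟩
    exact h u hu

/-- Reinhardt's lower bound for the diameter-to-perimeter ratio of a convex `m`-gon, attained by
the equilateral Reinhardt polygons when `m` has an odd factor. -/
def reinhardtRatio (m : ℕ) : ℝ := (2 * (m * sin (π / (2 * m))))⁻¹

lemma rRatio_le_reinhardtRatio_iff {e : Fin m → E2} (hm : m ≠ 0) (he : 0 < ∑ j, ‖e j‖) :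
    rRatio e ≤ reinhardtRatio m ↔
      ∀ u : E2, ‖u‖ = 1 → (∑ j, |⟪e j, u⟫|) * (m * sin (π / (2 * m))) ≤ ∑ j, ‖e j‖ := by
  have hms : 0 < m * sin (π / (2 * m)) :=
    mul_pos (by exact_mod_cast hm.bot_lt) (sin_pi_div_two_mul_pos hm)
  have hscale : reinhardtRatio m * (2 * ∑ j, ‖e j‖) = (∑ j, ‖e j‖) / (m * sin (π / (2 * m))) := by
    rw [reinhardtRatio, mul_inv, div_eq_mul_inv]
    ring
  simp only [rRatio_le_iff he, hscale, le_div_iff₀ hms]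

end Ratio

section ReinhardtEdges

/-- The edges of a Reinhardt polygon when `m = p * k` with `k > 1` odd: the harmonic frame with
signs alternating between consecutive blocks of `p` vectors. -/
def reinhardtEdges (m p : ℕ) : Fin m → E2 :=
  fun j => (-1 : ℝ) ^ ((j : ℕ) / p) • harmonicFrame m j

lemma harmonicFrame_eq_rot (m : ℕ) (j : Fin m) :
    harmonicFrame m j = rot ((j : ℕ) * π / m) (vec2 1 0) := by
  ext i
  fin_cases i <;> simp [harmonicFrame, rot_apply_zero, rot_apply_one, vec2]

lemma norm_vec2_one_zero : ‖vec2 1 0‖ = 1 := by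
  simp [vec2, EuclideanSpace.norm_eq]

lemma norm_reinhardtEdges (m p : ℕ) (j : Fin m) : ‖reinhardtEdges m p j‖ = 1 := by
  rw [reinhardtEdges, norm_smul, harmonicFrame_eq_rot, norm_rot, norm_vec2_one_zero]
  simp

lemma reinhardtEdges_injective (m p : ℕ) : Function.Injective (reinhardtEdges m p) := by
  intro i j hij
  have hm : (0 : ℝ) < m := by exact_mod_cast i.pos
  have hv : vec2 1 0 ≠ 0 := norm_ne_zero_iff.1 (by simp [norm_vec2_one_zero])
  simp only [reinhardtEdges, harmonicFrame_eq_rot] at hij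
  have hsin := sin_sub_eq_zero_of_smul_rot_eq hv (pow_ne_zero _ (by norm_num)) hij
  have hlt (k : Fin m) : (k : ℕ) * π / m < π := by
    rw [div_lt_iff₀ hm, mul_comm]
    exact mul_lt_mul_of_pos_left (by exact_mod_cast k.2) pi_pos
  have hnonneg (k : Fin m) : 0 ≤ (k : ℕ) * π / m := by positivity
  have hsub := (sin_eq_zero_iff_of_lt_of_lt (by linarith [hlt j, hnonneg i])
    (by linarith [hlt i, hnonneg j])).1 hsin
  rw [sub_eq_zero, div_left_inj' hm.ne', mul_left_inj' pi_ne_zero] at hsub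
  exact Fin.ext (by exact_mod_cast hsub)

lemma sum_range_mul_neg_one_pow_div_mul_pow {R : Type*} [CommRing R] {p : ℕ} (hp : 0 < p)
    (z : R) (k : ℕ) :
    ∑ j ∈ Finset.range (p * k), (-1 : R) ^ (j / p) * z ^ j =
      (∑ c ∈ Finset.range p, z ^ c) * ∑ b ∈ Finset.range k, (-z ^ p) ^ b := by
  induction k with
  | zero => simp
  | succ k ih =>
    rw [Nat.mul_succ, Finset.sum_range_add, ih, Finset.sum_range_succ, mul_add]
    congr 1
    rw [Finset.sum_mul]
    refine Finset.sum_congr rfl fun c hc => ?_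
    rw [Nat.mul_add_div hp, Nat.div_eq_of_lt (Finset.mem_range.1 hc), add_zero, neg_pow (z ^ p),
      pow_add, pow_mul]
    ring

lemma sum_range_mul_neg_one_pow_div_mul_pow_eq_zero {R : Type*} [CommRing R] [IsDomain R]
    {p k : ℕ} (hp : 0 < p) (hk : Odd k) {z : R} (hz : z ^ (p * k) = -1) (hzp : z ^ p ≠ -1) :
    ∑ j ∈ Finset.range (p * k), (-1 : R) ^ (j / p) * z ^ j = 0 := by
  have hgeom := mul_neg_geom_sum (-z ^ p) k
  rw [hk.neg_pow, ← pow_mul, hz, neg_neg, sub_self] at hgeom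
  have hne : 1 - -z ^ p ≠ 0 := fun h => hzp (by linear_combination h)
  rw [sum_range_mul_neg_one_pow_div_mul_pow hp,
    (mul_eq_zero.1 hgeom).resolve_left hne, mul_zero]

lemma sum_reinhardtEdges_eq_zero {p k : ℕ} (hp : 0 < p) (hk : Odd k) (hk1 : 1 < k) :
    ∑ j, reinhardtEdges (p * k) p j = 0 := by
  have hp' : (p : ℂ) ≠ 0 := by exact_mod_cast hp.ne'
  have hk' : (k : ℂ) ≠ 0 := by exact_mod_cast hk.pos.ne'
  set z : ℂ := Complex.exp (π / (p * k) * Complex.I) with hz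
  have hzm : z ^ (p * k) = -1 := by
    rw [hz, ← Complex.exp_nat_mul, ← Complex.exp_pi_mul_I]
    congr 1
    push_cast
    field_simp
  have hzp : z ^ p = Complex.exp ((π / k : ℝ) * Complex.I) := by
    rw [hz, ← Complex.exp_nat_mul]
    congr 1
    push_cast
    field_simp
  have him : 0 < (z ^ p).im := by
    rw [hzp, Complex.exp_ofReal_mul_I_im]
    exact sin_pos_of_pos_of_lt_pi (by have := hk.pos; positivity)
      (div_lt_self pi_pos (by exact_mod_cast hk1))
  have hzp_ne : z ^ p ≠ -1 := fun h => by simp [h] at him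
  simp only [reinhardtEdges, harmonicFrame_eq_rot]
  refine sum_smul_rot_eq_zero ?_ _
  rw [← sum_range_mul_neg_one_pow_div_mul_pow_eq_zero hp hk hzm hzp_ne, Finset.sum_range]
  refine Finset.sum_congr rfl fun j _ => ?_
  rw [hz, ← Complex.exp_nat_mul]
  push_cast
  ring_nf

lemma isEdgeFamily_reinhardtEdges {p k : ℕ} (hp : 0 < p) (hk : Odd k) (hk1 : 1 < k) :
    IsEdgeFamily (reinhardtEdges (p * k) p) := by
  refine ⟨fun j => norm_ne_zero_iff.1 (norm_reinhardtEdges _ p j ▸ one_ne_zero),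
    fun i j hij h => ?_, sum_reinhardtEdges_eq_zero hp hk hk1⟩
  simp only [norm_reinhardtEdges, inv_one, one_smul] at h
  exact hij (reinhardtEdges_injective _ p h)

lemma rRatio_reinhardtEdges_le {m : ℕ} (hm : m ≠ 0) (p : ℕ) :
    rRatio (reinhardtEdges m p) ≤ reinhardtRatio m := by
  have hsum : ∑ j, ‖reinhardtEdges m p j‖ = m := by simp [norm_reinhardtEdges]
  have hm' : (0 : ℝ) < m := by exact_mod_cast hm.bot_lt
  rw [rRatio_le_reinhardtRatio_iff hm (by rwa [hsum]), hsum]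
  intro u hu
  obtain ⟨t, rfl⟩ := exists_eq_rot_of_norm_eq_one hu
  have hterm (j : Fin m) : |⟪reinhardtEdges m p j, rot t (vec2 1 0)⟫| =
      |sin ((j : ℕ) * π / m - (t - π / 2))| := by
    rw [reinhardtEdges, harmonicFrame_eq_rot, real_inner_smul_left, inner_rot_rot,
      norm_vec2_one_zero, abs_mul, abs_neg_one_pow, one_pow, one_mul, one_mul, ← sub_add,
      sin_add_pi_div_two]
  simp only [hterm]
  rw [mul_left_comm]
  exact mul_le_of_le_one_right hm'.le (sum_abs_sin_mul_sin_le_one hm _)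

lemma IsOptimalEdgeFamily.rRatio_le {m : ℕ} {e : Fin m → E2} (he : IsOptimalEdgeFamily e)
    (hm : m ≠ 0) (hodd : ∃ k, Odd k ∧ 1 < k ∧ k ∣ m) : rRatio e ≤ reinhardtRatio m := by
  obtain ⟨k, hk, hk1, hkm⟩ := hodd
  obtain ⟨p, rfl⟩ := dvd_iff_exists_eq_mul_left.1 hkm
  have hp : 0 < p := Nat.pos_of_ne_zero (left_ne_zero_of_mul hm)
  exact (he.2 _ (isEdgeFamily_reinhardtEdges hp hk hk1)).trans (rRatio_reinhardtEdges_le hm p)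

end ReinhardtEdges

section Rigidity

lemma abs_sin_sub_eq_of_sub_eq_int_mul_pi {α ψ : ℝ} (h : ∃ k : ℤ, ψ - α = k * π) (θ : ℝ) :
    |sin (θ - α)| = |sin (θ - ψ)| := by
  obtain ⟨k, hk⟩ := h
  rw [show θ - ψ = θ - α - k * π by linarith, sin_sub_int_mul_pi, abs_mul, abs_neg_one_zpow,
    one_mul]

lemma eq_pi_of_sin_eq_zero {x : ℝ} (hx : x ∈ Set.Ioc 0 π) (h : sin x = 0) : x = π := by
  by_contra hne
  exact (sin_pos_of_pos_of_lt_pi hx.1 (hx.2.lt_of_ne hne)).ne' h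

lemma range_eq_of_rRatio_le {m : ℕ} {e : Fin m → E2} {z : Fin m} (hz : e z ≠ 0) {α ψ : Fin m → ℝ}
    (hangle : ∀ i, ‖e z‖ • e i = ‖e i‖ • rot (α i) (e z)) (hψ : ∀ i, ψ i ∈ Set.Ioc 0 π)
    (hmod : ∀ i, ∃ k : ℤ, ψ i - α i = k * π) (hr : rRatio e ≤ reinhardtRatio m) :
    Set.range ψ = Set.range fun j : Fin m => ((j : ℕ) + 1) * π / m := by
  have hperimeter : 0 < ∑ j, ‖e j‖ :=
    Finset.sum_pos' (fun j _ => norm_nonneg _) ⟨z, Finset.mem_univ z, norm_pos_iff.2 hz⟩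
  have habs (θ : ℝ) (j : Fin m) : |sin (θ - α j)| = |sin (θ - ψ j)| :=
    abs_sin_sub_eq_of_sub_eq_int_mul_pi (hmod j) θ
  have hψz : ψ z = π := by
    have hsin : sin (0 - α z) = 0 :=
      sin_sub_eq_zero_of_smul_rot_eq hz (norm_ne_zero_iff.2 hz) (by rw [rot_zero, ← hangle])
    have hsin' := habs 0 z
    rw [hsin, abs_zero, zero_sub, sin_neg, abs_neg, eq_comm, abs_eq_zero] at hsin'
    exact eq_pi_of_sin_eq_zero (hψ z) hsin'
  refine range_eq_of_sum_mul_abs_sin_le hperimeter (fun j => Set.Ioc_subset_Icc_self (hψ j)) hψz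
    fun θ => ?_
  have hwidth := (rRatio_le_reinhardtRatio_iff z.pos.ne' hperimeter).1 hr _
    (norm_inv_smul_rot hz (θ + π / 2))
  simpa only [abs_inner_eq_norm_mul_abs_sin hz (hangle _), habs] using hwidth

end Rigidity

/-- Let `m ≥ 3` have an odd factor and let `e` be an optimal edge family.
If `α_i ∈ [0,2π)` is the counterclockwise angle from `e_1` to `e_i` (i.e. the direction of
`e_i` is that of `e_1` rotated by `α_i`) and `ψ_i ∈ (0,π]` with `ψ_i ≡ α_i (mod π)`, then
`{ψ_1,…,ψ_m} = {jπ/m : j = 1,…,m}`. -/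
theorem stmt18 {m : ℕ} (hm : 3 ≤ m) (hodd : ∃ k, Odd k ∧ 1 < k ∧ k ∣ m)
    (e : Fin m → E2) (hopt : IsOptimalEdgeFamily e)
    (α ψ : Fin m → ℝ)
    (hα : ∀ i, 0 ≤ α i ∧ α i < 2 * π)
    (hangle : ∀ i, ‖e ⟨0, by omega⟩‖ • e i = ‖e i‖ • rot (α i) (e ⟨0, by omega⟩))
    (hψ : ∀ i, 0 < ψ i ∧ ψ i ≤ π ∧ ∃ k : ℤ, ψ i - α i = k * π) :
    Set.range ψ = Set.range (fun j : Fin m => ((j : ℕ) + 1) * π / m) := by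
  exact range_eq_of_rRatio_le (hopt.1.1 _) hangle (fun i => ⟨(hψ i).1, (hψ i).2.1⟩)
    (fun i => (hψ i).2.2) (hopt.rRatio_le (by omega) hodd)
end
end

section
/- For every integer m ≥ 2 and every matrix A = [a_1,…,a_m]ᵀ ∈ ℝ^{m×2}, the optimal lower Lipschitz constant satisfies L_A² ≤ (1/2)·∑_{j=1}^m ‖a_j‖₂² − (1/(2m·sin(π/(2m))))·∑_{j=1}^m ‖a_j‖₂². -/
noncomputable section

open Real
open scoped RealInnerProductSpace ENNReal

/-!
For an orthonormal pair `x, y` one has `dist(x, y) = √2` and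
`(|⟪a, x⟫| - |⟪a, y⟫|)² = ‖a‖² - 2 |⟪a, x⟫ ⟪a, y⟫|`; in polar form the last term is
`‖a‖² |sin (2t - β)|`, where `t` is the angle of `a` and `β` twice that of `x`. So it suffices to
find a direction `β` in which `∑ w_j |sin (φ_j - β)|`, with `w_j = ‖a_j‖²` and `φ_j = 2 t_j`, is at
least `∑ w_j / (m sin (π / 2m))`.

This is an averaging argument. Modulo `π` the angles `φ_j` cut a half turn into `m` gaps `δ_k` with
midpoints `μ_k`; give `μ_k` the weight `sin (δ_k / 2)`. Then `2 sin (δ_k / 2) |sin (φ_j - μ_k)|` is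
the variation of `cos (φ_j - ·)` over the `k`-th gap, so these terms add up to at least `2` for
every `j`, while the total weight is at most `m sin (π / 2m)` by concavity of the sine.
-/

section HalfTurn

lemma sum_sin_le_card_mul_sin {ι : Type*} (s : Finset ι) {p : ι → ℝ}
    (hp : ∀ i ∈ s, p i ∈ Set.Icc 0 π) :
    ∑ i ∈ s, sin (p i) ≤ s.card * sin ((∑ i ∈ s, p i) / s.card) := by
  rcases s.eq_empty_or_nonempty with rfl | hs
  · simp
  have hcard : (0 : ℝ) < s.card := by exact_mod_cast hs.card_pos
  have jensen := strictConcaveOn_sin_Icc.concaveOn.le_map_sum (w := fun _ ↦ (s.card : ℝ)⁻¹)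
    (fun _ _ ↦ by positivity) (by simp [hcard.ne']) hp
  simp only [smul_eq_mul, ← Finset.mul_sum] at jensen
  rwa [inv_mul_le_iff₀ hcard, inv_mul_eq_div] at jensen

lemma abs_sin_add_int_mul_pi (x : ℝ) (n : ℤ) : |sin (x + n * π)| = |sin x| := by
  rw [sin_add_int_mul_pi, abs_mul, abs_neg_one_zpow, one_mul]

variable {ψ : ℕ → ℝ} {m : ℕ}

lemma half_gap_mem_Icc_s19 (hψ : Monotone ψ) (hend : ψ m = ψ 0 + π) {k : ℕ} (hk : k < m) :
    (ψ (k + 1) - ψ k) / 2 ∈ Set.Icc 0 π := by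
  have h_step : ψ k ≤ ψ (k + 1) := hψ k.le_succ
  have h_first : ψ 0 ≤ ψ k := hψ k.zero_le
  have h_last : ψ (k + 1) ≤ ψ m := hψ hk
  constructor <;> linarith [pi_pos]

lemma sin_half_gap_nonneg (hψ : Monotone ψ) (hend : ψ m = ψ 0 + π) {k : ℕ} (hk : k < m) :
    0 ≤ sin ((ψ (k + 1) - ψ k) / 2) :=
  sin_nonneg_of_mem_Icc (half_gap_mem_Icc_s19 hψ hend hk)

lemma sum_sin_half_gap_le (hψ : Monotone ψ) (hend : ψ m = ψ 0 + π) :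
    ∑ k ∈ Finset.range m, sin ((ψ (k + 1) - ψ k) / 2) ≤ m * sin (π / (2 * m)) := by
  have h_sum : ∑ k ∈ Finset.range m, (ψ (k + 1) - ψ k) / 2 = π / 2 := by
    rw [← Finset.sum_div, Finset.sum_range_sub, hend, add_sub_cancel_left]
  have h := sum_sin_le_card_mul_sin (Finset.range m)
    fun k hk ↦ half_gap_mem_Icc_s19 hψ hend (Finset.mem_range.1 hk)
  rwa [h_sum, Finset.card_range, div_div] at h

lemma two_le_sum_abs_cos_sub_cos (hend : ψ m = ψ 0 + π) {j : ℕ} (hj : j ≤ m) :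
    2 ≤ ∑ k ∈ Finset.range m, |cos (ψ j - ψ k) - cos (ψ j - ψ (k + 1))| := by
  let f : ℕ → ℝ := fun k ↦ cos (ψ j - ψ k)
  have h_peak : f j = 1 := by simp [f]
  have h_antipodal : f m = -f 0 := by
    simp only [f, hend, ← sub_sub, cos_sub_pi]
  calc (2 : ℝ) = (f j - f 0) + (f j - f m) := by rw [h_peak, h_antipodal]; ring
    _ ≤ dist (f 0) (f j) + dist (f j) (f m) := by
      rw [dist_comm]
      exact add_le_add (le_abs_self _) (le_abs_self _)
    _ ≤ ∑ k ∈ Finset.range j, dist (f k) (f (k + 1)) +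
        ∑ k ∈ Finset.Ico j m, dist (f k) (f (k + 1)) :=
      add_le_add (dist_le_range_sum_dist f j) (dist_le_Ico_sum_dist f hj)
    _ = ∑ k ∈ Finset.range m, |cos (ψ j - ψ k) - cos (ψ j - ψ (k + 1))| :=
      Finset.sum_range_add_sum_Ico _ hj

lemma one_le_sum_sin_half_gap_mul_abs_sin (hψ : Monotone ψ) (hend : ψ m = ψ 0 + π) {j : ℕ}
    (hj : j ≤ m) :
    1 ≤ ∑ k ∈ Finset.range m,
      sin ((ψ (k + 1) - ψ k) / 2) * |sin (ψ j - (ψ k + ψ (k + 1)) / 2)| := by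
  have h_chord : ∀ k ∈ Finset.range m, |cos (ψ j - ψ k) - cos (ψ j - ψ (k + 1))| =
      2 * (sin ((ψ (k + 1) - ψ k) / 2) * |sin (ψ j - (ψ k + ψ (k + 1)) / 2)|) := by
    intro k hk
    have h_mid : (ψ j - ψ k + (ψ j - ψ (k + 1))) / 2 = ψ j - (ψ k + ψ (k + 1)) / 2 := by ring
    rw [cos_sub_cos, h_mid, sub_sub_sub_cancel_left, abs_mul, abs_mul, abs_neg, abs_two,
      abs_of_nonneg (sin_half_gap_nonneg hψ hend (Finset.mem_range.1 hk))]
    ring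
  have h := two_le_sum_abs_cos_sub_cos hend hj
  rw [Finset.sum_congr rfl h_chord, ← Finset.mul_sum] at h
  linarith

lemma exists_monotone_extend_add {n : ℕ} [NeZero n] {g : Fin n → ℝ} {c : ℝ}
    (hg : Monotone g) (hg_le : ∀ i, g i ≤ g 0 + c) :
    ∃ ψ : ℕ → ℝ, Monotone ψ ∧ ψ n = ψ 0 + c ∧ ∀ i : Fin n, ψ i = g i := by
  refine ⟨fun k ↦ if h : k < n then g ⟨k, h⟩ else g 0 + c, monotone_nat_of_le_succ fun k ↦ ?_,
    ?_, fun i ↦ by simp⟩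
  · by_cases hk : k + 1 < n
    · simpa only [hk, k.lt_succ_self.trans hk, dite_true] using hg (Fin.mk_le_mk.2 k.le_succ)
    · simp only [hk, dite_false]
      split_ifs
      exacts [hg_le _, le_rfl]
  · simp [NeZero.pos n]

lemma exists_monotone_half_turn {ι : Type*} [Fintype ι] [Nonempty ι] (φ : ι → ℝ) :
    ∃ ψ : ℕ → ℝ, Monotone ψ ∧ ψ (Fintype.card ι) = ψ 0 + π ∧
      ∀ i, ∃ j ≤ Fintype.card ι, ∃ n : ℤ, φ i = ψ j + n * π := by
  have : NeZero (Fintype.card ι) := ⟨Fintype.card_ne_zero⟩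
  let e := Fintype.equivFin ι
  let f : Fin (Fintype.card ι) → ℝ := fun j ↦ toIcoMod pi_pos 0 (φ (e.symm j))
  let σ := Tuple.sort f
  have hf : ∀ j, f j ∈ Set.Ico 0 π := fun j ↦ by
    simpa using toIcoMod_mem_Ico pi_pos 0 (φ (e.symm j))
  obtain ⟨ψ, hψ, hend, hψf⟩ := exists_monotone_extend_add (Tuple.monotone_sort f)
    fun i ↦ (hf (σ i)).2.le.trans (le_add_of_nonneg_left (hf (σ 0)).1)
  refine ⟨ψ, hψ, hend, fun i ↦ ⟨σ.symm (e i), (σ.symm (e i)).2.le, toIcoDiv pi_pos 0 (φ i), ?_⟩⟩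
  have h_mod : ψ (σ.symm (e i)) = toIcoMod pi_pos 0 (φ i) := by simp [hψf, f, σ]
  rw [h_mod, ← zsmul_eq_mul, toIcoMod_add_toIcoDiv_zsmul]

theorem sum_le_mul_card_mul_sin_of_forall_sum_mul_abs_sin_le {ι : Type*} [Fintype ι]
    {φ w : ι → ℝ} {H : ℝ} (hw : ∀ i, 0 ≤ w i) (hH : ∀ β, ∑ i, w i * |sin (φ i - β)| ≤ H) :
    ∑ i, w i ≤ H * (Fintype.card ι * sin (π / (2 * Fintype.card ι))) := by
  rcases isEmpty_or_nonempty ι with hι | hι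
  · simp
  obtain ⟨ψ, hψ, hend, hφ⟩ := exists_monotone_half_turn φ
  have hH_nonneg : 0 ≤ H :=
    (Finset.sum_nonneg fun i _ ↦ mul_nonneg (hw i) (abs_nonneg _)).trans (hH 0)
  let s : ℕ → ℝ := fun k ↦ sin ((ψ (k + 1) - ψ k) / 2)
  let μ : ℕ → ℝ := fun k ↦ (ψ k + ψ (k + 1)) / 2
  have hs_nonneg : ∀ k ∈ Finset.range (Fintype.card ι), 0 ≤ s k := fun k hk ↦
    sin_half_gap_nonneg hψ hend (Finset.mem_range.1 hk)
  have h_cover : ∀ i, 1 ≤ ∑ k ∈ Finset.range (Fintype.card ι), s k * |sin (φ i - μ k)| := by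
    intro i
    obtain ⟨j, hj, n, hn⟩ := hφ i
    simp only [hn, add_sub_right_comm, abs_sin_add_int_mul_pi]
    exact one_le_sum_sin_half_gap_mul_abs_sin hψ hend hj
  calc ∑ i, w i
      ≤ ∑ i, w i * ∑ k ∈ Finset.range (Fintype.card ι), s k * |sin (φ i - μ k)| :=
        Finset.sum_le_sum fun i _ ↦ le_mul_of_one_le_right (hw i) (h_cover i)
    _ = ∑ k ∈ Finset.range (Fintype.card ι), s k * ∑ i, w i * |sin (φ i - μ k)| := by
        simp only [Finset.mul_sum]
        rw [Finset.sum_comm]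
        simp only [mul_left_comm]
    _ ≤ ∑ k ∈ Finset.range (Fintype.card ι), s k * H :=
        Finset.sum_le_sum fun k hk ↦ mul_le_mul_of_nonneg_left (hH _) (hs_nonneg k hk)
    _ = H * ∑ k ∈ Finset.range (Fintype.card ι), s k := by rw [← Finset.sum_mul, mul_comm]
    _ ≤ H * (Fintype.card ι * sin (π / (2 * Fintype.card ι))) :=
        mul_le_mul_of_nonneg_left (sum_sin_half_gap_le hψ hend) hH_nonneg

end HalfTurn

section UnitVec

/-- The unit vector of ℝ² at angle `θ`, used to write the rows of a frame in polar form. -/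
def unitVec (θ : ℝ) : E2 := vec2 (cos θ) (sin θ)

lemma inner_unitVec_unitVec (s t : ℝ) : ⟪unitVec s, unitVec t⟫ = cos (s - t) := by
  simp only [unitVec, vec2, PiLp.inner_apply, Fin.sum_univ_two, cos_sub]
  simp [mul_comm]

lemma norm_unitVec (θ : ℝ) : ‖unitVec θ‖ = 1 := by
  rw [norm_eq_sqrt_real_inner, inner_unitVec_unitVec, sub_self, cos_zero, sqrt_one]

lemma inner_unitVec_add_pi_div_two (s t : ℝ) :
    ⟪unitVec s, unitVec (t + π / 2)⟫ = sin (s - t) := by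
  rw [inner_unitVec_unitVec, ← sub_sub, cos_sub_pi_div_two]

lemma orthonormal_unitVec (θ : ℝ) : Orthonormal ℝ ![unitVec θ, unitVec (θ + π / 2)] := by
  simp [orthonormal_vecCons_iff, norm_unitVec, inner_unitVec_add_pi_div_two]

lemma exists_eq_norm_smul_unitVec (v : E2) : ∃ θ, v = ‖v‖ • unitVec θ := by
  let z : ℂ := ⟨v 0, v 1⟩
  have h_norm : ‖z‖ = ‖v‖ := by
    simp [z, EuclideanSpace.norm_eq, Complex.norm_def, Complex.normSq_mk, Fin.sum_univ_two, sq]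
  refine ⟨z.arg, PiLp.ext fun i ↦ ?_⟩
  rw [← h_norm]
  fin_cases i
  · exact (Complex.norm_mul_cos_arg z).symm
  · exact (Complex.norm_mul_sin_arg z).symm

end UnitVec

section Phaseless

lemma norm_sq_eq_inner_sq_add_inner_sq_of_finrank_eq_two {E : Type*} [NormedAddCommGroup E]
    [InnerProductSpace ℝ E] (hE : Module.finrank ℝ E = 2) {x y : E}
    (h : Orthonormal ℝ ![x, y]) (v : E) : ‖v‖ ^ 2 = ⟪v, x⟫ ^ 2 + ⟪v, y⟫ ^ 2 := by
  let b := OrthonormalBasis.mk h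
    (h.linearIndependent.span_eq_top_of_card_eq_finrank (by simp [hE])).ge
  simpa [b, Fin.sum_univ_two] using (b.sum_sq_norm_inner_left v).symm

variable {m : ℕ} (a : Fin m → E2) {x y : E2}

lemma pdist_nonneg (x y : E2) : 0 ≤ pdist x y :=
  le_min (norm_nonneg _) (norm_nonneg _)

lemma ratioSet_nonneg {r : ℝ} (hr : r ∈ ratioSet a) : 0 ≤ r := by
  obtain ⟨x, y, -, rfl⟩ := hr
  exact div_nonneg (norm_nonneg _) (pdist_nonneg x y)

lemma lipL_nonneg : 0 ≤ lipL a :=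
  Real.sInf_nonneg fun _ ↦ ratioSet_nonneg a

lemma lipL_mul_pdist_le (x y : E2) : lipL a * pdist x y ≤ ‖PhiMap a x - PhiMap a y‖ := by
  rcases (pdist_nonneg x y).eq_or_lt with h_zero | h_pos
  · simp [← h_zero]
  · rw [← le_div_iff₀ h_pos]
    exact csInf_le ⟨0, fun _ ↦ ratioSet_nonneg a⟩ ⟨x, y, h_pos.ne', rfl⟩

lemma pdist_of_orthonormal (h : Orthonormal ℝ ![x, y]) : pdist x y = √2 := by
  obtain ⟨hx, hy, hxy⟩ : ‖x‖ = 1 ∧ ‖y‖ = 1 ∧ ⟪x, y⟫ = 0 := by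
    simpa [orthonormal_vecCons_iff, and_comm, and_assoc] using h
  have h_sub : ‖x - y‖ = √2 := by
    rw [norm_sub_eq_sqrt_iff_real_inner_eq_zero.2 hxy, hx, hy, mul_one, one_add_one_eq_two]
  have h_add : ‖x + y‖ = √2 := by
    rw [norm_add_eq_sqrt_iff_real_inner_eq_zero.2 hxy, hx, hy, mul_one, one_add_one_eq_two]
  rw [pdist, h_sub, h_add, min_self]

lemma norm_PhiMap_sub_PhiMap_sq (h : Orthonormal ℝ ![x, y]) :
    ‖PhiMap a x - PhiMap a y‖ ^ 2 = ∑ j, ‖a j‖ ^ 2 - 2 * ∑ j, |⟪a j, x⟫ * ⟪a j, y⟫| := by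
  rw [EuclideanSpace.norm_sq_eq, Finset.mul_sum, ← Finset.sum_sub_distrib]
  refine Finset.sum_congr rfl fun j _ ↦ ?_
  calc ‖(PhiMap a x - PhiMap a y) j‖ ^ 2 = (|⟪a j, x⟫| - |⟪a j, y⟫|) ^ 2 := sq_abs _
    _ = ‖a j‖ ^ 2 - 2 * |⟪a j, x⟫ * ⟪a j, y⟫| := by
      rw [sub_sq, sq_abs, sq_abs, abs_mul,
        norm_sq_eq_inner_sq_add_inner_sq_of_finrank_eq_two finrank_euclideanSpace_fin h]
      ring

lemma two_mul_lipL_sq_le (h : Orthonormal ℝ ![x, y]) :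
    2 * lipL a ^ 2 ≤ ∑ j, ‖a j‖ ^ 2 - 2 * ∑ j, |⟪a j, x⟫ * ⟪a j, y⟫| :=
  calc 2 * lipL a ^ 2 = (lipL a * pdist x y) ^ 2 := by
        rw [pdist_of_orthonormal h, mul_pow, sq_sqrt zero_le_two, mul_comm]
    _ ≤ ‖PhiMap a x - PhiMap a y‖ ^ 2 := by
        gcongr
        · exact mul_nonneg (lipL_nonneg a) (pdist_nonneg x y)
        · exact lipL_mul_pdist_le a x y
    _ = _ := norm_PhiMap_sub_PhiMap_sq a h

lemma two_mul_abs_inner_mul_inner_unitVec {v : E2} {t : ℝ} (hv : v = ‖v‖ • unitVec t) (α : ℝ) :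
    2 * |⟪v, unitVec α⟫ * ⟪v, unitVec (α + π / 2)⟫| = ‖v‖ ^ 2 * |sin (2 * t - 2 * α)| := by
  have h_cos : ⟪v, unitVec α⟫ = ‖v‖ * cos (t - α) := by
    conv_lhs => rw [hv, real_inner_smul_left, inner_unitVec_unitVec]
  have h_sin : ⟪v, unitVec (α + π / 2)⟫ = ‖v‖ * sin (t - α) := by
    conv_lhs => rw [hv, real_inner_smul_left, inner_unitVec_add_pi_div_two]
  rw [h_cos, h_sin, ← mul_sub, sin_two_mul]
  simp only [abs_mul, abs_norm, abs_two]
  ring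

lemma sum_norm_sq_mul_abs_sin_le {t : Fin m → ℝ} (ht : ∀ j, a j = ‖a j‖ • unitVec (t j))
    (β : ℝ) :
    ∑ j, ‖a j‖ ^ 2 * |sin (2 * t j - β)| ≤ ∑ j, ‖a j‖ ^ 2 - 2 * lipL a ^ 2 := by
  have h := two_mul_lipL_sq_le a (orthonormal_unitVec (β / 2))
  simp only [Finset.mul_sum, two_mul_abs_inner_mul_inner_unitVec (ht _),
    mul_div_cancel₀ β two_ne_zero] at h
  linarith

end Phaseless

/-- For every `m ≥ 2` and every `A = [a_1,…,a_m]ᵀ ∈ ℝ^{m×2}`, the optimal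
lower Lipschitz constant satisfies
`L_A² ≤ (1/2)·∑ ‖a_j‖² − (1/(2m·sin(π/(2m))))·∑ ‖a_j‖²`. -/
theorem stmt19 {m : ℕ} (hm : 2 ≤ m) (a : Fin m → E2) :
    lipL a ^ 2 ≤
      (1 / 2) * ∑ j, ‖a j‖ ^ 2 -
        (1 / (2 * m * Real.sin (π / (2 * m)))) * ∑ j, ‖a j‖ ^ 2 := by
  choose t ht using fun j ↦ exists_eq_norm_smul_unitVec (a j)
  have h_sum := sum_le_mul_card_mul_sin_of_forall_sum_mul_abs_sin_le (fun j ↦ sq_nonneg ‖a j‖)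
    (sum_norm_sq_mul_abs_sin_le a ht)
  rw [Fintype.card_fin] at h_sum
  have hm_real : (2 : ℝ) ≤ m := by exact_mod_cast hm
  have h_sin : 0 < sin (π / (2 * m)) :=
    sin_pos_of_pos_of_lt_pi (by positivity) (div_lt_self pi_pos (by linarith))
  have h_div : (∑ j, ‖a j‖ ^ 2) / (m * sin (π / (2 * m))) ≤
      ∑ j, ‖a j‖ ^ 2 - 2 * lipL a ^ 2 :=
    (div_le_iff₀ (by positivity)).2 h_sum
  have h_half : 1 / (2 * m * sin (π / (2 * m))) * ∑ j, ‖a j‖ ^ 2 =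
      1 / 2 * ((∑ j, ‖a j‖ ^ 2) / (m * sin (π / (2 * m)))) := by
    field_simp
  linarith
end
end
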